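/- Let H be a real Hilbert space, n ≥ 2, and let x ∈ H^n have pairwise distinct coordinates. Then for every T with 0 < T < δ(x)/(2(n−1)) there exists a solution u : [0, T] → H^n of the ODE system du_i/dt = Σ_{j≠i} (u_j − u_i)/‖u_j − u_i‖ with u(0) = x whose coordinates remain pairwise distinct on all of [0, T]; moreover, for every i and all t ∈ [0, T], ‖u_i(t) − x_i‖ ≤ (n−1)t. -/

import Mathlib

/-!
Each velocity is a sum of `n - 1` vectors of norm at most one, so up to time `T` no coordinate moves
farther than `(n - 1) T`. If `2 (n - 1) T < δ`, all configurations within that distance of the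
initial one keep their coordinates at least `c = δ - 2 (n - 1) T > 0` apart. Normalization is
`2 / c`-Lipschitz there, hence so is the vector field up to a constant factor, and Picard–Lindelöf
gives a solution on all of `[0, T]`.
-/

open Finset Metric NormedSpace Set

section Normalize

variable {E : Type*} [NormedAddCommGroup E] [NormedSpace ℝ E]

lemma norm_normalize_le_one (v : E) : ‖normalize v‖ ≤ 1 := by
  rw [NormedSpace.normalize, norm_smul, norm_inv, norm_norm]
  exact inv_mul_le_one

lemma norm_mul_norm_normalize_sub_le (v w : E) :
    ‖v‖ * ‖normalize v - normalize w‖ ≤ 2 * ‖v - w‖ := by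
  have decomp : ‖v‖ • (normalize v - normalize w) = (v - w) + (‖w‖ - ‖v‖) • normalize w := by
    simp only [smul_sub, sub_smul, norm_smul_normalize]
    abel
  have radial : ‖(‖w‖ - ‖v‖) • normalize w‖ ≤ ‖v - w‖ := by
    calc ‖(‖w‖ - ‖v‖) • normalize w‖ = |‖w‖ - ‖v‖| * ‖normalize w‖ := norm_smul _ _
      _ ≤ |‖w‖ - ‖v‖| := mul_le_of_le_one_right (abs_nonneg _) (norm_normalize_le_one w)
      _ ≤ ‖v - w‖ := norm_sub_rev v w ▸ abs_norm_sub_norm_le w v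
  calc ‖v‖ * ‖normalize v - normalize w‖ = ‖(v - w) + (‖w‖ - ‖v‖) • normalize w‖ := by
        rw [← decomp, norm_smul, norm_norm]
    _ ≤ ‖v - w‖ + ‖(‖w‖ - ‖v‖) • normalize w‖ := norm_add_le _ _
    _ ≤ 2 * ‖v - w‖ := by linarith

lemma norm_normalize_sub_le {c : ℝ} (hc : 0 < c) {v : E} (hv : c ≤ ‖v‖) (w : E) :
    ‖normalize v - normalize w‖ ≤ 2 / c * ‖v - w‖ := by
  rw [div_mul_eq_mul_div, le_div_iff₀' hc]
  exact (mul_le_mul_of_nonneg_right hv (norm_nonneg _)).trans (norm_mul_norm_normalize_sub_le v w)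

end Normalize

section Separation

variable {ι E : Type*} [SeminormedAddCommGroup E]

lemma norm_apply_sub_apply_sub_le [Fintype ι] (y z : ι → E) (i j : ι) :
    ‖(y i - y j) - (z i - z j)‖ ≤ 2 * ‖y - z‖ := by
  calc ‖(y i - y j) - (z i - z j)‖ = ‖(y - z) i - (y - z) j‖ := by
        rw [Pi.sub_apply, Pi.sub_apply, sub_sub_sub_comm]
    _ ≤ ‖(y - z) i‖ + ‖(y - z) j‖ := norm_sub_le _ _
    _ ≤ 2 * ‖y - z‖ := by
        linarith [norm_le_pi_norm (y - z) i, norm_le_pi_norm (y - z) j]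

lemma sub_two_mul_le_norm_sub_of_mem_closedBall [Fintype ι] {x y : ι → E} {δ r : ℝ}
    (hx : Pairwise fun i j => δ ≤ ‖x i - x j‖) (hy : y ∈ closedBall x r) :
    Pairwise fun i j => δ - 2 * r ≤ ‖y i - y j‖ := by
  intro i j hij
  have hyr : ‖x - y‖ ≤ r := by rwa [norm_sub_rev, ← mem_closedBall_iff_norm]
  linarith [hx hij, norm_le_norm_add_norm_sub' (x i - x j) (y i - y j),
    norm_apply_sub_apply_sub_le x y i j]

lemma sInf_norm_sub_le [LinearOrder ι] (x : ι → E) :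
    Pairwise fun i j => sInf {d : ℝ | ∃ k l : ι, k < l ∧ d = ‖x k - x l‖} ≤ ‖x i - x j‖ := by
  have bdd : BddBelow {d : ℝ | ∃ k l : ι, k < l ∧ d = ‖x k - x l‖} :=
    ⟨0, by rintro _ ⟨k, l, -, rfl⟩; exact norm_nonneg _⟩
  intro i j hij
  rcases hij.lt_or_gt with hlt | hgt
  · exact csInf_le bdd ⟨i, j, hlt, rfl⟩
  · exact csInf_le bdd ⟨j, i, hgt, norm_sub_rev _ _⟩

end Separation

section UnitAttraction

variable {ι E : Type*} [Fintype ι] [DecidableEq ι] [NormedAddCommGroup E] [NormedSpace ℝ E]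

/-- The vector field on configurations `y : ι → E` in which every point is pulled towards each of
the others with unit speed; the flow of the theorem is `u' = unitAttraction u`. Since
`normalize 0 = 0`, coinciding points do not attract each other. -/
noncomputable def unitAttraction (y : ι → E) (i : ι) : E :=
  ∑ j ∈ univ.erase i, normalize (y j - y i)

lemma norm_unitAttraction_le (y : ι → E) :
    ‖unitAttraction y‖ ≤ (Fintype.card ι - 1 : ℕ) := by
  refine (pi_norm_le_iff_of_nonneg (Nat.cast_nonneg _)).2 fun i => ?_
  calc ‖unitAttraction y i‖ ≤ ∑ _j ∈ univ.erase i, (1 : ℝ) :=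
        norm_sum_le_of_le _ fun j _ => norm_normalize_le_one (y j - y i)
    _ = (Fintype.card ι - 1 : ℕ) := by simp

lemma norm_unitAttraction_sub_le {c : ℝ} (hc : 0 < c) {y : ι → E}
    (hy : Pairwise fun i j => c ≤ ‖y i - y j‖) (z : ι → E) :
    ‖unitAttraction y - unitAttraction z‖ ≤ (Fintype.card ι - 1 : ℕ) * (4 / c) * ‖y - z‖ := by
  refine (pi_norm_le_iff_of_nonneg (by positivity)).2 fun i => ?_
  have term_le (j : ι) (hj : j ∈ univ.erase i) :
      ‖normalize (y j - y i) - normalize (z j - z i)‖ ≤ 4 / c * ‖y - z‖ :=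
    calc ‖normalize (y j - y i) - normalize (z j - z i)‖
        ≤ 2 / c * ‖(y j - y i) - (z j - z i)‖ :=
          norm_normalize_sub_le hc (hy (ne_of_mem_erase hj)) _
      _ ≤ 2 / c * (2 * ‖y - z‖) := by gcongr; exact norm_apply_sub_apply_sub_le y z j i
      _ = 4 / c * ‖y - z‖ := by ring
  calc ‖(unitAttraction y - unitAttraction z) i‖
      = ‖∑ j ∈ univ.erase i, (normalize (y j - y i) - normalize (z j - z i))‖ := by
        rw [sum_sub_distrib, Pi.sub_apply, unitAttraction, unitAttraction]
    _ ≤ ∑ _j ∈ univ.erase i, 4 / c * ‖y - z‖ := norm_sum_le_of_le _ term_le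
    _ = (Fintype.card ι - 1 : ℕ) * (4 / c) * ‖y - z‖ := by simp [mul_assoc]

lemma lipschitzOnWith_unitAttraction_closedBall {x : ι → E} {δ r : ℝ}
    (hx : Pairwise fun i j => δ ≤ ‖x i - x j‖) (hr : 2 * r < δ) :
    LipschitzOnWith ((Fintype.card ι - 1 : ℕ) * (4 / (δ - 2 * r))).toNNReal unitAttraction
      (closedBall x r) :=
  LipschitzOnWith.of_dist_le' fun y hy z _ => by
    simpa only [dist_eq_norm] using norm_unitAttraction_sub_le (sub_pos.2 hr)
      (sub_two_mul_le_norm_sub_of_mem_closedBall hx hy) z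

end UnitAttraction

lemma exists_hasDerivWithinAt_Icc_of_lipschitzOnWith_of_norm_le {E : Type*}
    [NormedAddCommGroup E] [NormedSpace ℝ E] [CompleteSpace E] {V : E → E} {x : E} {L K : NNReal}
    {T : ℝ} (hT : 0 ≤ T) (hLip : LipschitzOnWith K V (closedBall x (L * T)))
    (hnorm : ∀ y, ‖V y‖ ≤ L) :
    ∃ u : ℝ → E, u 0 = x ∧
      (∀ t ∈ Icc 0 T, HasDerivWithinAt u (V (u t)) (Icc 0 T) t) ∧
      ∀ t ∈ Icc 0 T, ‖u t - x‖ ≤ L * t := by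
  lift T to NNReal using hT
  have picard : IsPicardLindelof (fun _ => V) (tmin := 0) (tmax := T) ⟨0, le_rfl, T.2⟩ x
      (L * T) 0 L K :=
    .of_time_independent (fun y _ => hnorm y) (by simpa only [NNReal.coe_mul] using hLip) (by simp)
  obtain ⟨u, rfl, hderiv⟩ := picard.exists_eq_forall_mem_Icc_hasDerivWithinAt₀
  refine ⟨u, rfl, hderiv, fun t ht => ?_⟩
  simpa only [sub_zero] using
    norm_image_sub_le_of_norm_deriv_le_segment' hderiv (fun s _ => hnorm (u s)) t ht

theorem flow_short_time_existence_general {ι E : Type*} [Fintype ι] [DecidableEq ι]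
    [NormedAddCommGroup E] [NormedSpace ℝ E] [CompleteSpace E] (x : ι → E) {δ T : ℝ}
    (hδ : Pairwise fun i j => δ ≤ ‖x i - x j‖) (hT0 : 0 ≤ T)
    (hT : 2 * ((Fintype.card ι - 1 : ℕ) * T) < δ) :
    ∃ u : ℝ → ι → E,
      u 0 = x ∧
      (∀ t ∈ Icc 0 T, ∀ i j, i ≠ j → u t i ≠ u t j) ∧
      (∀ t ∈ Icc 0 T, ∀ i,
        HasDerivWithinAt (fun s => u s i) (unitAttraction (u t) i) (Icc 0 T) t) ∧
      (∀ t ∈ Icc 0 T, ∀ i, ‖u t i - x i‖ ≤ (Fintype.card ι - 1 : ℕ) * t) := by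
  obtain ⟨u, hu0, hderiv, hbound⟩ :=
    exists_hasDerivWithinAt_Icc_of_lipschitzOnWith_of_norm_le (L := (Fintype.card ι - 1 : ℕ)) hT0
      (lipschitzOnWith_unitAttraction_closedBall hδ hT) norm_unitAttraction_le
  refine ⟨u, hu0, fun t ht i j hij => ?_, fun t ht => hasDerivWithinAt_pi.1 (hderiv t ht),
    fun t ht i => (norm_le_pi_norm (u t - x) i).trans (hbound t ht)⟩
  have mem_ball : u t ∈ closedBall x ((Fintype.card ι - 1 : ℕ) * T) :=
    mem_closedBall_iff_norm.2 <| (hbound t ht).trans <|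
      mul_le_mul_of_nonneg_left ht.2 (Nat.cast_nonneg _)
  exact sub_ne_zero.1 <| norm_pos_iff.1 <|
    (sub_pos.2 hT).trans_le (sub_two_mul_le_norm_sub_of_mem_closedBall hδ mem_ball hij)

/-- Short-time existence of the gradient flow. If `x ∈ H^n` has pairwise distinct coordinates
and `0 < T < δ(x)/(2(n−1))`, where `δ(x) = min_{i<j} ‖x_i − x_j‖`, then there is a solution
`u : [0, T] → H^n` of `du_i/dt = ∑_{j ≠ i} (u_j − u_i)/‖u_j − u_i‖`, `u(0) = x`, whose
coordinates stay pairwise distinct on `[0, T]` and satisfy `‖u_i(t) − x_i‖ ≤ (n−1)t`. -/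
theorem flow_short_time_existence
    {H : Type*} [NormedAddCommGroup H] [InnerProductSpace ℝ H] [CompleteSpace H]
    (n : ℕ) (hn : 2 ≤ n) (x : Fin n → H)
    (hx : ∀ i j : Fin n, i ≠ j → x i ≠ x j)
    (T : ℝ) (hT0 : 0 < T)
    (hT : T < sInf {d : ℝ | ∃ i j : Fin n, i < j ∧ d = ‖x i - x j‖} / (2 * ((n : ℝ) - 1))) :
    ∃ u : ℝ → Fin n → H,
      u 0 = x ∧
      (∀ t ∈ Set.Icc (0 : ℝ) T, ∀ i j : Fin n, i ≠ j → u t i ≠ u t j) ∧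
      (∀ t ∈ Set.Icc (0 : ℝ) T, ∀ i : Fin n,
        HasDerivWithinAt (fun s => u s i)
          (∑ j ∈ Finset.univ.erase i, (‖u t j - u t i‖)⁻¹ • (u t j - u t i))
          (Set.Icc (0 : ℝ) T) t) ∧
      (∀ t ∈ Set.Icc (0 : ℝ) T, ∀ i : Fin n, ‖u t i - x i‖ ≤ ((n : ℝ) - 1) * t) := by
  have hcard : ((Fintype.card (Fin n) - 1 : ℕ) : ℝ) = n - 1 := by
    rw [Fintype.card_fin, Nat.cast_pred (by lia)]
  have hn1 : (0 : ℝ) < n - 1 := sub_pos.2 (Nat.one_lt_cast.2 hn)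
  rw [lt_div_iff₀ (by positivity), mul_comm, mul_assoc, ← hcard] at hT
  exact hcard ▸ flow_short_time_existence_general x (sInf_norm_sub_le x) hT0.le hT
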